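/- Let ℓ be a prime, r ≥ 1 an integer, v₀ ∈ (ℤ/ℓ^rℤ)² and M₀ ∈ M₂(ℤ/ℓ^rℤ). Suppose det(M₀ − I) = 0 in ℤ/ℓ^rℤ, v₀ ∈ Row(M₀ − I), and the reduction of M₀ modulo ℓ is not the identity matrix. Then the sequence N_k(v₀,M₀)/ℓ^{6(k−r)} converges as k → ∞ and its limit equals ℓ/(ℓ+1). -/

import Mathlib

open Matrix Filter Topology

/-- `N_k(v₀, M₀)`: the number of pairs `(v, M) ∈ (ℤ/ℓ^kℤ)² × M₂(ℤ/ℓ^kℤ)` whose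
reduction mod `ℓ^r` is `(v₀, M₀)` and such that `v` lies in the row space of `M - I`. -/
noncomputable def liftCount (ℓ r k : ℕ) (hrk : r ≤ k) (v₀ : Fin 2 → ZMod (ℓ ^ r))
    (M₀ : Matrix (Fin 2) (Fin 2) (ZMod (ℓ ^ r))) : ℕ :=
  Nat.card {p : (Fin 2 → ZMod (ℓ ^ k)) × Matrix (Fin 2) (Fin 2) (ZMod (ℓ ^ k)) //
    (∀ i, ZMod.castHom (pow_dvd_pow ℓ hrk) (ZMod (ℓ ^ r)) (p.1 i) = v₀ i) ∧
    p.2.map (ZMod.castHom (pow_dvd_pow ℓ hrk) (ZMod (ℓ ^ r))) = M₀ ∧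
    ∃ x : Fin 2 → ZMod (ℓ ^ k), x ᵥ* (p.2 - 1) = p.1}

/-!
Write `A = M - I` and `A₀ = M₀ - I`. Since `A₀` has an entry that is a unit, after permuting rows
and columns every lift `A = (a, b; c, d)` has `a` invertible, and with `u = b / a` Gaussian
elimination shows that `v = (s, t)` lies in `Row(A)` if and only if `D ∣ w`, where `D = d - c u` and
`w = t - s u`. The substitution `(d, t) ↦ (D, w)` is a translation, and because `det A₀ = 0` and
`v₀ ∈ Row(A₀)` both `D` and `w` reduce to `0`. So `a`, `b`, `c`, `s` range freely over cosets of
the kernel `K` of the reduction, and `N_k = |K|⁴ · #{(D, w) ∈ K² : D ∣ w}` with `|K| = ℓʲ`, where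
`j = k - r`.

If `ℓ^(r+1) ∤ D`, then `D` is `ℓ^r` times a unit and `w ∈ K` is arbitrary; this gives a recursion in
`r` whose solution is `#{(D, w) ∈ K² : D ∣ w} = (ℓ^(2j+1) + 1) / (ℓ + 1)`.
-/

section Kernel

lemma ncard_preimage_singleton_eq_card_ker {R S : Type*} [Ring R] [Ring S] {f : R →+* S}
    (hf : Function.Surjective f) (s : S) : (f ⁻¹' {s}).ncard = Nat.card (RingHom.ker f) :=
  Nat.card_congr (AddMonoidHom.fiberEquivKerOfSurjective (f := f.toAddMonoidHom) hf s)

lemma card_ker_mul_card_of_surjective {R S : Type*} [Ring R] [Ring S] {f : R →+* S}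
    (hf : Function.Surjective f) : Nat.card (RingHom.ker f) * Nat.card S = Nat.card R := by
  rw [Submodule.card_eq_card_quotient_mul_card (RingHom.ker f),
    Nat.card_congr (RingHom.quotientKerEquivOfSurjective hf).toEquiv]

lemma ker_zmod_castHom {m n : ℕ} (h : m ∣ n) :
    RingHom.ker (ZMod.castHom h (ZMod m)) = Ideal.span {(m : ZMod n)} := by
  ext x
  obtain ⟨a, rfl⟩ := ZMod.intCast_surjective x
  rw [RingHom.mem_ker, map_intCast, ZMod.intCast_zmod_eq_zero_iff_dvd, Ideal.mem_span_singleton]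
  constructor <;> intro ha
  · simpa using map_dvd (Int.castRingHom (ZMod n)) ha
  · simpa [ZMod.intCast_zmod_eq_zero_iff_dvd] using map_dvd (ZMod.castHom h (ZMod m)) ha

lemma isLocalHom_zmod_castHom {m n k : ℕ} (h : m ∣ n) (hk : n ∣ m ^ k) :
    IsLocalHom (ZMod.castHom h (ZMod m)) where
  map_nonunit x hx := by
    obtain ⟨a, rfl⟩ := ZMod.intCast_surjective x
    rw [map_intCast, ZMod.coe_int_isUnit_iff_isCoprime] at hx
    rw [ZMod.coe_int_isUnit_iff_isCoprime]
    exact (hx.pow_left (m := k)).of_isCoprime_of_dvd_left (by exact_mod_cast hk)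

end Kernel

variable {R S m n p q : Type*} [CommRing R] [CommRing S]

section RowLifts

variable [Fintype m] [Fintype p]

/-- The pairs `(v, A)` over `R` that lift `(v₀, A₀)` along `f` and satisfy `v ∈ Row(A)`. The paper's
condition `v ∈ Row(M - I)` is the case `A = M - I`. -/
def rowLifts (f : R →+* S) (v₀ : n → S) (A₀ : Matrix m n S) : Set ((n → R) × Matrix m n R) :=
  {q | f ∘ q.1 = v₀ ∧ q.2.map f = A₀ ∧ ∃ x, x ᵥ* q.2 = q.1}

lemma exists_submatrix_vecMul_eq_iff (v : n → R) (A : Matrix m n R) (e : p ≃ m) (e' : q ≃ n) :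
    (∃ x, x ᵥ* A.submatrix e e' = v ∘ e') ↔ ∃ x, x ᵥ* A = v := by
  refine (e.arrowCongr (Equiv.refl R)).exists_congr fun x ↦ ?_
  rw [submatrix_vecMul_equiv, e'.surjective.injective_comp_right.eq_iff]
  rfl

lemma ncard_rowLifts_submatrix (f : R →+* S) (v₀ : n → S) (A₀ : Matrix m n S) (e : p ≃ m)
    (e' : q ≃ n) :
    (rowLifts f (v₀ ∘ e') (A₀.submatrix e e')).ncard = (rowLifts f v₀ A₀).ncard := by
  refine (Set.ncard_congr' (Equiv.subtypeEquiv ((e'.symm.arrowCongr (Equiv.refl R)).prodCongr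
    (Matrix.reindex e.symm e'.symm)) ?_)).symm
  rintro ⟨v, A⟩
  refine and_congr ?_ (and_congr ?_ (exists_submatrix_vecMul_eq_iff v A e e').symm)
  · exact (e'.surjective.injective_comp_right.eq_iff (a := f ∘ v) (b := v₀)).symm
  · exact ((Matrix.reindex e.symm e'.symm).injective.eq_iff (a := A.map f) (b := A₀)).symm

lemma det_submatrix_perm [DecidableEq m] (A : Matrix m m R) (σ τ : Equiv.Perm m) :
    (A.submatrix σ τ).det = σ.sign * (τ.sign * A.det) := by
  rw [← det_permute', ← det_permute, submatrix_submatrix]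
  rfl

end RowLifts

section Pivot

variable {A : Matrix (Fin 2) (Fin 2) R}

/-- The ratio `A₀₁ / A₀₀`, the multiple of the first column that clears the rest of the first row
when `A₀₀` is a unit. It is `0` when `A₀₀` is not a unit. -/
noncomputable def pivotRatio (A : Matrix (Fin 2) (Fin 2) R) : R :=
  Ring.inverse (A 0 0) * A 0 1

lemma mul_pivotRatio (h : IsUnit (A 0 0)) : A 0 0 * pivotRatio A = A 0 1 :=
  Ring.mul_inverse_cancel_left _ _ h

lemma map_pivotRatio (f : R →+* S) (h : IsUnit (A 0 0)) :
    f (pivotRatio A) = pivotRatio (A.map f) := by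
  rw [← (h.map f).mul_right_inj, ← map_mul, mul_pivotRatio h]
  exact (mul_pivotRatio (A := A.map f) (h.map f)).symm

lemma det_eq_mul_sub_mul_pivotRatio (h : IsUnit (A 0 0)) :
    A.det = A 0 0 * (A 1 1 - A 1 0 * pivotRatio A) := by
  rw [det_fin_two, ← mul_pivotRatio h]
  ring

lemma exists_vecMul_eq_iff_dvd (h : IsUnit (A 0 0)) (v : Fin 2 → R) :
    (∃ x, x ᵥ* A = v) ↔ A 1 1 - A 1 0 * pivotRatio A ∣ v 1 - v 0 * pivotRatio A := by
  have hu := mul_pivotRatio h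
  constructor
  · rintro ⟨x, rfl⟩
    refine ⟨x 1, ?_⟩
    simp only [vecMul_eq_sum, Fin.sum_univ_two, Pi.add_apply, Pi.smul_apply, smul_eq_mul]
    linear_combination -x 0 * hu
  · rintro ⟨y, hy⟩
    obtain ⟨a', ha'⟩ := h.exists_left_inv
    refine ⟨![(v 0 - y * A 1 0) * a', y], funext <| Fin.forall_fin_two.2 ⟨?_, ?_⟩⟩ <;>
      simp only [vecMul_eq_sum, Fin.sum_univ_two, Pi.add_apply, Pi.smul_apply, smul_eq_mul,
        cons_val_zero, cons_val_one]
    · linear_combination (v 0 - y * A 1 0) * ha'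
    · linear_combination (v 0 - y * A 1 0) * (pivotRatio A * ha' - a' * hu) - hy

/-- Gaussian elimination with pivot `A₀₀`, as a change of coordinates on pairs `(v, A)`: the
coordinates `A₁₁` and `v₁` are replaced by what remains of them after subtracting `pivotRatio A`
times the first column. -/
noncomputable def pivotEquiv :
    (Fin 2 → R) × Matrix (Fin 2) (Fin 2) R ≃ ((R × R) × R × R) × R × R where
  toFun p := (((p.2 0 0, p.2 0 1), p.2 1 0, p.1 0),
    (p.2 1 1 - p.2 1 0 * pivotRatio p.2, p.1 1 - p.1 0 * pivotRatio p.2))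
  invFun := fun (((a, b), c, s), d, t) ↦
    (![s, t + s * (Ring.inverse a * b)], !![a, b; c, d + c * (Ring.inverse a * b)])
  left_inv := by
    rintro ⟨v, A⟩
    ext i j
    · fin_cases i <;> simp [pivotRatio]
    · fin_cases i <;> fin_cases j <;> simp [pivotRatio]
  right_inv _ := by simp [pivotRatio]

end Pivot

/-- The pairs `(D, w)` in the ideal `I` with `D ∣ w`, to which `pivotEquiv` reduces `rowLifts` for
`I` the kernel of the reduction; the condition `w ∈ I` follows from the other two. -/
def dvdPairs (I : Ideal R) : Set (R × R) :=
  {q | q.1 ∈ I ∧ q.1 ∣ q.2}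

section CountRowLifts

variable {f : R →+* S} [IsLocalHom f] {v₀ : Fin 2 → S} {A₀ : Matrix (Fin 2) (Fin 2) S}

lemma mem_rowLifts_iff_pivotEquiv_mem (h : IsUnit (A₀ 0 0)) (hdet : A₀.det = 0)
    (hv₀ : ∃ x, x ᵥ* A₀ = v₀) (p : (Fin 2 → R) × Matrix (Fin 2) (Fin 2) R) :
    p ∈ rowLifts f v₀ A₀ ↔ pivotEquiv p ∈
      (((f ⁻¹' {A₀ 0 0}) ×ˢ (f ⁻¹' {A₀ 0 1})) ×ˢ (f ⁻¹' {A₀ 1 0}) ×ˢ (f ⁻¹' {v₀ 0})) ×ˢ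
        dvdPairs (RingHom.ker f) := by
  have hD₀ : A₀ 1 1 - A₀ 1 0 * pivotRatio A₀ = 0 := by
    rwa [det_eq_mul_sub_mul_pivotRatio h, h.mul_right_eq_zero] at hdet
  have hw₀ : v₀ 1 - v₀ 0 * pivotRatio A₀ = 0 := by
    rwa [exists_vecMul_eq_iff_dvd h, hD₀, zero_dvd_iff] at hv₀
  obtain ⟨v, A⟩ := p
  constructor
  · rintro ⟨rfl, rfl, hx⟩
    have hu : IsUnit (A 0 0) := (isUnit_map_iff f _).1 h
    rw [← map_pivotRatio f hu] at hD₀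
    refine ⟨⟨⟨rfl, rfl⟩, rfl, rfl⟩, ?_, (exists_vecMul_eq_iff_dvd hu v).1 hx⟩
    simpa [pivotEquiv] using hD₀
  · rintro ⟨⟨⟨h00, h01⟩, h10, hv0⟩, hD, hdvd⟩
    have hw := Ideal.mem_of_dvd _ hdvd hD
    simp only [pivotEquiv, Equiv.coe_fn_mk, Set.mem_preimage, Set.mem_singleton_iff] at *
    have hu : IsUnit (A 0 0) := (isUnit_map_iff f _).1 (h00 ▸ h)
    have hratio : f (pivotRatio A) = pivotRatio A₀ := by
      rw [map_pivotRatio f hu]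
      simp only [pivotRatio, map_apply, h00, h01]
    simp only [RingHom.mem_ker, map_sub, map_mul, hratio, h10, hv0, sub_eq_zero]
      at hD hw hD₀ hw₀
    refine ⟨funext <| Fin.forall_fin_two.2 ⟨hv0, hw.trans hw₀.symm⟩, ?_,
      (exists_vecMul_eq_iff_dvd hu v).2 hdvd⟩
    simp [← Matrix.ext_iff, Fin.forall_fin_two, h00, h01, h10, hD, hD₀]

lemma ncard_rowLifts_of_isUnit_zero_zero (hf : Function.Surjective f) (h : IsUnit (A₀ 0 0))
    (hdet : A₀.det = 0) (hv₀ : ∃ x, x ᵥ* A₀ = v₀) :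
    (rowLifts f v₀ A₀).ncard =
      Nat.card (RingHom.ker f) ^ 4 * (dvdPairs (RingHom.ker f)).ncard := by
  rw [Set.ncard_congr' (pivotEquiv.subtypeEquiv (mem_rowLifts_iff_pivotEquiv_mem h hdet hv₀))]
  simp only [Set.ncard_prod, ncard_preimage_singleton_eq_card_ker hf]
  ring

theorem ncard_rowLifts (hf : Function.Surjective f) {i j : Fin 2} (hij : IsUnit (A₀ i j))
    (hdet : A₀.det = 0) (hv₀ : ∃ x, x ᵥ* A₀ = v₀) :
    (rowLifts f v₀ A₀).ncard =
      Nat.card (RingHom.ker f) ^ 4 * (dvdPairs (RingHom.ker f)).ncard := by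
  rw [← ncard_rowLifts_submatrix f v₀ A₀ (Equiv.swap 0 i) (Equiv.swap 0 j)]
  apply ncard_rowLifts_of_isUnit_zero_zero hf
  · simpa using hij
  · rw [det_submatrix_perm, hdet, mul_zero, mul_zero]
  · rwa [exists_submatrix_vecMul_eq_iff]

end CountRowLifts

section CountDvdPairs

lemma dvdPairs_span_singleton {π : R} (hπ : ∀ x, ¬ π ∣ x → IsUnit x) (d : R) :
    dvdPairs (Ideal.span {d}) = dvdPairs (Ideal.span {d * π}) ∪
      ((Ideal.span {d} : Set R) \ Ideal.span {d * π}) ×ˢ (Ideal.span {d} : Set R) := by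
  ext ⟨a, b⟩
  simp only [dvdPairs, Set.mem_union, Set.mem_prod, Set.mem_sdiff, Set.mem_ofPred_eq,
    SetLike.mem_coe, Ideal.mem_span_singleton]
  constructor
  · rintro ⟨hda, hab⟩
    by_cases h : d * π ∣ a
    · exact Or.inl ⟨h, hab⟩
    · exact Or.inr ⟨⟨hda, h⟩, hda.trans hab⟩
  · rintro (⟨hda, hab⟩ | ⟨⟨⟨y, rfl⟩, hy⟩, hdb⟩)
    · exact ⟨(dvd_mul_right d π).trans hda, hab⟩
    · have hu : IsUnit y := hπ y fun hπy ↦ hy (mul_dvd_mul_left d hπy)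
      exact ⟨dvd_mul_right d y, hu.mul_right_dvd.2 hdb⟩

lemma ncard_dvdPairs_span_singleton [Finite R] {π : R} (hπ : ∀ x, ¬ π ∣ x → IsUnit x) (d : R) :
    (dvdPairs (Ideal.span {d})).ncard = (dvdPairs (Ideal.span {d * π})).ncard +
      (Nat.card (Ideal.span {d}) - Nat.card (Ideal.span {d * π})) * Nat.card (Ideal.span {d}) := by
  have hle : Ideal.span {d * π} ≤ Ideal.span {d} :=
    Ideal.span_singleton_le_span_singleton.2 (dvd_mul_right d π)
  rw [dvdPairs_span_singleton hπ, Set.ncard_union_eq, Set.ncard_prod, Set.ncard_sdiff hle]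
  · rfl
  · exact Set.disjoint_left.2 fun q hq hq' ↦ hq'.1.2 hq.1

lemma dvdPairs_bot : dvdPairs (⊥ : Ideal R) = {(0, 0)} := by
  ext ⟨a, b⟩
  simp +contextual [dvdPairs, Prod.ext_iff]

end CountDvdPairs

section PrimePower

variable {ℓ : ℕ}

lemma card_ker_zmod_castHom_pow [NeZero ℓ] (r j : ℕ) :
    Nat.card (RingHom.ker (ZMod.castHom (pow_dvd_pow ℓ (r.le_add_right j)) (ZMod (ℓ ^ r)))) =
      ℓ ^ j := by
  have h := card_ker_mul_card_of_surjective
    (ZMod.castHom_surjective (pow_dvd_pow ℓ (r.le_add_right j)))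
  rw [Nat.card_zmod, Nat.card_zmod] at h
  exact Nat.eq_of_mul_eq_mul_right (NeZero.pos (ℓ ^ r)) (h.trans (by rw [pow_add, mul_comm]))

lemma card_span_pow_zmod [NeZero ℓ] {r j k : ℕ} (hk : k = r + j) :
    Nat.card (Ideal.span {(ℓ : ZMod (ℓ ^ k)) ^ r}) = ℓ ^ j := by
  subst hk
  rw [← card_ker_zmod_castHom_pow r j, ker_zmod_castHom, Nat.cast_pow]

lemma isUnit_zmod_pow_of_not_dvd (hℓ : ℓ.Prime) {k : ℕ} (hk : k ≠ 0) (x : ZMod (ℓ ^ k))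
    (hx : ¬ (ℓ : ZMod (ℓ ^ k)) ∣ x) : IsUnit x := by
  have := Fact.mk hℓ
  have := isLocalHom_zmod_castHom (dvd_pow_self ℓ hk) dvd_rfl
  rw [← Ideal.mem_span_singleton, ← ker_zmod_castHom (dvd_pow_self ℓ hk), RingHom.mem_ker] at hx
  exact (isUnit_map_iff _ x).1 (Ne.isUnit hx)

lemma ncard_dvdPairs_span_pow_zmod (hℓ : ℓ.Prime) {r j k : ℕ} (hk : k = r + j) :
    (dvdPairs (Ideal.span {(ℓ : ZMod (ℓ ^ k)) ^ r})).ncard * (ℓ + 1) = ℓ ^ (2 * j + 1) + 1 := by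
  have := NeZero.mk hℓ.ne_zero
  induction j generalizing r with
  | zero =>
    obtain rfl : k = r := hk
    have hzero : (ℓ : ZMod (ℓ ^ k)) ^ k = 0 := by exact_mod_cast ZMod.natCast_self (ℓ ^ k)
    simp [hzero, dvdPairs_bot]
  | succ j ih =>
    have hle : ℓ ^ j ≤ ℓ ^ (j + 1) := Nat.pow_le_pow_right hℓ.pos j.le_succ
    have ih := ih (r := r + 1) (by lia)
    rw [ncard_dvdPairs_span_singleton (isUnit_zmod_pow_of_not_dvd hℓ (by lia)), ← pow_succ,
      card_span_pow_zmod hk, card_span_pow_zmod (j := j) (by lia)]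
    zify [hle] at ih ⊢
    linear_combination ih

end PrimePower

section LiftCount

lemma exists_isUnit_sub_one_apply [DecidableEq m] {F : Type*} [Field F] {f : R →+* F}
    [IsLocalHom f] {M : Matrix m m R} (hM : M.map f ≠ 1) : ∃ i j, IsUnit ((M - 1) i j) := by
  contrapose! hM
  ext i j
  have hij : f ((M - 1) i j) = 0 := by
    by_contra hne
    exact hM i j ((isUnit_map_iff f _).1 (Ne.isUnit hne))
  rw [Matrix.sub_apply, map_sub, sub_eq_zero] at hij
  exact hij.trans (congr_fun₂ (Matrix.map_one f f.map_zero f.map_one) i j)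

variable {ℓ r : ℕ} {v₀ : Fin 2 → ZMod (ℓ ^ r)} {M₀ : Matrix (Fin 2) (Fin 2) (ZMod (ℓ ^ r))}

lemma liftCount_eq_ncard_rowLifts {k : ℕ} (hrk : r ≤ k) :
    liftCount ℓ r k hrk v₀ M₀ =
      (rowLifts (ZMod.castHom (pow_dvd_pow ℓ hrk) (ZMod (ℓ ^ r))) v₀ (M₀ - 1)).ncard := by
  refine Nat.card_congr (((Equiv.refl _).prodCongr (Equiv.subRight 1)).subtypeEquiv ?_)
  rintro ⟨v, M⟩
  refine and_congr funext_iff.symm (and_congr ?_ Iff.rfl)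
  change _ ↔ (ZMod.castHom _ (ZMod (ℓ ^ r))).mapMatrix (M - 1) = M₀ - 1
  rw [map_sub, map_one, sub_left_inj]
  rfl

lemma liftCount_mul_add_one (hℓ : ℓ.Prime) (hr : r ≠ 0) {i i' : Fin 2}
    (hunit : IsUnit ((M₀ - 1) i i')) (hdet : (M₀ - 1).det = 0)
    (hrow : ∃ x, x ᵥ* (M₀ - 1) = v₀) (j : ℕ) :
    liftCount ℓ r (r + j) (r.le_add_right j) v₀ M₀ * (ℓ + 1) =
      (ℓ ^ j) ^ 4 * (ℓ ^ (2 * j + 1) + 1) := by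
  have := NeZero.mk hℓ.ne_zero
  have hdvd := pow_dvd_pow ℓ (r.le_add_right j)
  have : IsLocalHom (ZMod.castHom hdvd (ZMod (ℓ ^ r))) :=
    isLocalHom_zmod_castHom hdvd (k := r + j)
      (pow_dvd_pow_of_dvd (dvd_pow_self ℓ hr) (r + j))
  rw [liftCount_eq_ncard_rowLifts, ncard_rowLifts (ZMod.castHom_surjective _) hunit hdet hrow,
    card_ker_zmod_castHom_pow, ker_zmod_castHom, mul_assoc, Nat.cast_pow,
    ncard_dvdPairs_span_pow_zmod hℓ rfl]

lemma tendsto_pow_mul_div_pow {x : ℝ} (hx : 1 < x) :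
    Tendsto (fun j : ℕ ↦ (x ^ j) ^ 4 * (x ^ (2 * j + 1) + 1) / (x + 1) / x ^ (6 * j))
      atTop (𝓝 (x / (x + 1))) := by
  have hgeom : Tendsto (fun j : ℕ ↦ (x ^ 2)⁻¹ ^ j) atTop (𝓝 0) :=
    tendsto_pow_atTop_nhds_zero_of_lt_one (by positivity)
      (inv_lt_one_of_one_lt₀ (one_lt_pow₀ hx two_ne_zero))
  have hlim := (hgeom.const_add x).div_const (x + 1)
  rw [add_zero] at hlim
  refine hlim.congr fun j ↦ ?_
  rw [inv_pow, ← pow_mul]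
  field_simp
  ring

end LiftCount

/-- Suppose `det(M₀ - I) = 0` in `ℤ/ℓ^rℤ`, `v₀ ∈ Row(M₀ - I)`, and `M₀` does not
reduce to the identity modulo `ℓ`.  Then `N_k(v₀, M₀)/ℓ^(6(k-r))` converges (as
`k = r + j → ∞`) to `ℓ/(ℓ+1)`. -/
theorem stmt_7 (ℓ : ℕ) (hℓ : ℓ.Prime) (r : ℕ) (hr : 1 ≤ r)
    (v₀ : Fin 2 → ZMod (ℓ ^ r)) (M₀ : Matrix (Fin 2) (Fin 2) (ZMod (ℓ ^ r)))
    (hdet : (M₀ - 1).det = 0)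
    (hrow : ∃ x : Fin 2 → ZMod (ℓ ^ r), x ᵥ* (M₀ - 1) = v₀)
    (hnotI : M₀.map (ZMod.castHom (dvd_pow_self ℓ (by omega : r ≠ 0)) (ZMod ℓ)) ≠ 1) :
    Tendsto
      (fun j : ℕ =>
        (liftCount ℓ r (r + j) (Nat.le_add_right r j) v₀ M₀ : ℝ) / (ℓ : ℝ) ^ (6 * j))
      atTop (𝓝 ((ℓ : ℝ) / ((ℓ : ℝ) + 1))) := by
  have hr0 : r ≠ 0 := by omega
  have := Fact.mk hℓ
  have := isLocalHom_zmod_castHom (dvd_pow_self ℓ hr0) dvd_rfl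
  obtain ⟨i, i', hunit⟩ := exists_isUnit_sub_one_apply hnotI
  refine (tendsto_pow_mul_div_pow (x := ℓ) (by exact_mod_cast hℓ.one_lt)).congr fun j ↦ ?_
  congr 1
  rw [div_eq_iff (by positivity)]
  exact_mod_cast (liftCount_mul_add_one hℓ hr0 hunit hdet hrow j).symm
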